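/- arXiv:2411.16040 — 2 statements merged into one kernel-verified Lean document; each statement's English description precedes it below -/
import Mathlib

section
/- Let (𝓑₁, 𝓑₀) be a Rota-Baxter operator on a crossed module of groups (H, G, t, Φ). On G × H define: (i) the multiplication (a, p) ·_{Φ̂} (b, q) = (a ·_{𝓑₀} b, p ·_{𝓑₁} Φ̂(a)(q)), where a ·_{𝓑₀} b = a·𝓑₀(a)·b·𝓑₀(a)⁻¹, p ·_{𝓑₁} q = p·𝓑₁(p)·q·𝓑₁(p)⁻¹, and Φ̂(a)(q) = Φ(a·𝓑₀(a))(q·𝓑₁(q)) · (Φ(𝓑₀(a))(𝓑₁(q)))⁻¹; (ii) the multiplication (a, p) ·_𝓑 (b, q) = (a, p) ·_Φ 𝓑(a, p) ·_Φ (b, q) ·_Φ 𝓑(a, p)⁻¹, where (a, p) ·_Φ (b, q) = (a·b, p·Φ(a)(q)) and 𝓑(a, p) = (𝓑₀(a), Φ(𝓑₀(a))(𝓑₁(Φ(𝓑₀(a)⁻¹·a⁻¹)(p)))). Then the map φ(a, p) = (a, p·𝓑₁(p)·Φ(a)(𝓑₁(p))⁻¹) is a bijection of G × H and satisfies φ((a,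 p) ·_{Φ̂} (b, q)) = φ(a, p) ·_𝓑 φ(b, q) for all (a, p), (b, q) ∈ G × H, i.e. φ is a group isomorphism from (G ⋉_{Φ̂} H, ·_{Φ̂}) to (G × H, ·_𝓑). -/
/-- A crossed module of groups. -/
structure IsCrossedModule {H G : Type*} [Group H] [Group G]
    (t : H → G) (Φ : G → H → H) : Prop where
  t_mul : ∀ p q : H, t (p * q) = t p * t q
  Φ_mul_hom : ∀ (a : G) (p q : H), Φ a (p * q) = Φ a p * Φ a q
  Φ_bij : ∀ a : G, Function.Bijective (Φ a)
  Φ_one : ∀ p : H, Φ 1 p = p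
  Φ_mul : ∀ (a b : G) (p : H), Φ (a * b) p = Φ a (Φ b p)
  peiffer : ∀ p q : H, Φ (t p) q = p * q * p⁻¹
  equivar : ∀ (a : G) (p : H), t (Φ a p) = a * t p * a⁻¹

/-- Rota-Baxter operator on a group. -/
def IsRotaBaxter {G : Type*} [Group G] (B : G → G) : Prop :=
  ∀ a b : G, B a * B b = B (a * B a * b * (B a)⁻¹)

/-- Rota-Baxter operator on a crossed module of groups. -/
structure IsCMRotaBaxter {H G : Type*} [Group H] [Group G]
    (t : H → G) (Φ : G → H → H) (B₁ : H → H) (B₀ : G → G) : Prop where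
  rb₁ : IsRotaBaxter B₁
  rb₀ : IsRotaBaxter B₀
  t_comm : ∀ p : H, t (B₁ p) = B₀ (t p)
  compat : ∀ (a : G) (p : H),
    Φ (B₀ a) (B₁ p) = B₁ (Φ (a * B₀ a) (p * B₁ p) * (Φ (B₀ a) (B₁ p))⁻¹)

/-- The semidirect product multiplication `(a,p)·_Φ(b,q) = (a·b, p·Φ(a)q)` on `G × H`. -/
def sdpMul {H G : Type*} [Group H] [Group G] (Φ : G → H → H) (m n : G × H) : G × H :=
  (m.1 * n.1, m.2 * Φ m.1 n.2)

/-- The inverse for `sdpMul`. -/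
def sdpInv {H G : Type*} [Group H] [Group G] (Φ : G → H → H) (m : G × H) : G × H :=
  (m.1⁻¹, Φ m.1⁻¹ m.2⁻¹)

/-- The operator `𝓑(a,p) = (B₀(a), Φ(B₀(a))(B₁(Φ(B₀(a)⁻¹·a⁻¹)(p))))` on `G ⋉_Φ H`. -/
def Bcal {H G : Type*} [Group H] [Group G] (Φ : G → H → H)
    (B₁ : H → H) (B₀ : G → G) (m : G × H) : G × H :=
  (B₀ m.1, Φ (B₀ m.1) (B₁ (Φ ((B₀ m.1)⁻¹ * m.1⁻¹) m.2)))

/-- The descended multiplication `p ·_B q = p · B(p) · q · B(p)⁻¹`. -/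
def mulB {X : Type*} [Group X] (B : X → X) (p q : X) : X := p * B p * q * (B p)⁻¹

/-- The descended action `Φ̂(a)(p)`. -/
def hatPhi {H G : Type*} [Group H] [Group G] (Φ : G → H → H)
    (B₁ : H → H) (B₀ : G → G) (a : G) (p : H) : H :=
  Φ (a * B₀ a) (p * B₁ p) * (Φ (B₀ a) (B₁ p))⁻¹

/-- The semidirect product multiplication `·_{Φ̂}` of the descended groups. -/
def sdpMulHat {H G : Type*} [Group H] [Group G] (Φ : G → H → H)
    (B₁ : H → H) (B₀ : G → G) (m n : G × H) : G × H :=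
  (mulB B₀ m.1 n.1, mulB B₁ m.2 (hatPhi Φ B₁ B₀ m.1 n.2))

/-- The multiplication `·_𝓑` descended from the Rota-Baxter operator `𝓑` on `G ⋉_Φ H`. -/
def mulBcal {H G : Type*} [Group H] [Group G] (Φ : G → H → H)
    (B₁ : H → H) (B₀ : G → G) (m n : G × H) : G × H :=
  sdpMul Φ (sdpMul Φ (sdpMul Φ m (Bcal Φ B₁ B₀ m)) n) (sdpInv Φ (Bcal Φ B₁ B₀ m))

namespace IsCrossedModule

variable {H G : Type*} [Group H] [Group G] {t : H → G} {Φ : G → H → H}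

theorem map_one (h : IsCrossedModule t Φ) (a : G) : Φ a 1 = 1 := by
  simpa using h.Φ_mul_hom a 1 1

theorem map_inv (h : IsCrossedModule t Φ) (a : G) (p : H) : Φ a p⁻¹ = (Φ a p)⁻¹ :=
  eq_inv_of_mul_eq_one_left (by rw [← h.Φ_mul_hom, inv_mul_cancel, h.map_one])

theorem inv_apply_self (h : IsCrossedModule t Φ) (a : G) (p : H) : Φ a⁻¹ (Φ a p) = p := by
  rw [← h.Φ_mul, inv_mul_cancel, h.Φ_one]

theorem apply_inv_self (h : IsCrossedModule t Φ) (a : G) (p : H) : Φ a (Φ a⁻¹ p) = p := by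
  rw [← h.Φ_mul, mul_inv_cancel, h.Φ_one]

end IsCrossedModule

theorem IsRotaBaxter.map_one {G : Type*} [Group G] {B : G → G} (h : IsRotaBaxter B) :
    B 1 = 1 := by
  simpa using h 1 1

/-- `B` sends the inverse of `a` in the descended group to `(B a)⁻¹`. -/
theorem IsRotaBaxter.map_descended_inv {G : Type*} [Group G] {B : G → G}
    (h : IsRotaBaxter B) (a : G) : B ((B a)⁻¹ * a⁻¹ * B a) = (B a)⁻¹ := by
  refine eq_inv_of_mul_eq_one_right ?_
  rw [h]
  simpa [mul_assoc] using h.map_one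

namespace IsCMRotaBaxter

variable {H G : Type*} [Group H] [Group G] {t : H → G} {Φ : G → H → H}
  {B₁ : H → H} {B₀ : G → G}

theorem map_hatPhi (h : IsCMRotaBaxter t Φ B₁ B₀) (a : G) (p : H) :
    B₁ (hatPhi Φ B₁ B₀ a p) = Φ (B₀ a) (B₁ p) :=
  (h.compat a p).symm

theorem hatPhi_mul_map_hatPhi (h : IsCMRotaBaxter t Φ B₁ B₀) (a : G) (p : H) :
    hatPhi Φ B₁ B₀ a p * B₁ (hatPhi Φ B₁ B₀ a p) = Φ (a * B₀ a) (p * B₁ p) := by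
  rw [h.map_hatPhi, hatPhi, inv_mul_cancel_right]

theorem hatPhi_surjective (h : IsCMRotaBaxter t Φ B₁ B₀) (hcm : IsCrossedModule t Φ) (a : G) :
    Function.Surjective (hatPhi Φ B₁ B₀ a) := by
  intro p
  refine ⟨hatPhi Φ B₁ B₀ ((B₀ a)⁻¹ * a⁻¹ * B₀ a) p, ?_⟩
  rw [hatPhi, h.hatPhi_mul_map_hatPhi, h.map_hatPhi, h.rb₀.map_descended_inv,
    mul_inv_cancel_right, ← mul_inv_rev, hcm.apply_inv_self, hcm.apply_inv_self,
    mul_inv_cancel_right]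

theorem twist_hatPhi (h : IsCMRotaBaxter t Φ B₁ B₀) (hcm : IsCrossedModule t Φ) (a : G) (p : H) :
    hatPhi Φ B₁ B₀ a p * B₁ (hatPhi Φ B₁ B₀ a p) * (Φ a (B₁ (hatPhi Φ B₁ B₀ a p)))⁻¹ =
      Φ (a * B₀ a) p := by
  rw [h.hatPhi_mul_map_hatPhi, h.map_hatPhi, ← hcm.Φ_mul, hcm.Φ_mul_hom, mul_inv_cancel_right]

theorem Bcal_twist (h : IsCMRotaBaxter t Φ B₁ B₀) (hcm : IsCrossedModule t Φ) (a : G) (p : H) :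
    Bcal Φ B₁ B₀ (a, p * B₁ p * (Φ a (B₁ p))⁻¹) = (B₀ a, B₁ p) := by
  obtain ⟨q, rfl⟩ := h.hatPhi_surjective hcm a p
  rw [h.twist_hatPhi hcm, h.map_hatPhi, Bcal, ← mul_inv_rev, hcm.inv_apply_self]

end IsCMRotaBaxter

theorem stmt6 {H G : Type*} [Group H] [Group G] (t : H → G) (Φ : G → H → H)
    (B₁ : H → H) (B₀ : G → G) (hcm : IsCrossedModule t Φ)
    (hrb : IsCMRotaBaxter t Φ B₁ B₀) :
    Function.Bijective
      (fun m : G × H => (m.1, m.2 * B₁ m.2 * (Φ m.1 (B₁ m.2))⁻¹)) ∧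
    ∀ m n : G × H,
      (fun m : G × H => (m.1, m.2 * B₁ m.2 * (Φ m.1 (B₁ m.2))⁻¹))
          (sdpMulHat Φ B₁ B₀ m n)
        = mulBcal Φ B₁ B₀
            ((fun m : G × H => (m.1, m.2 * B₁ m.2 * (Φ m.1 (B₁ m.2))⁻¹)) m)
            ((fun m : G × H => (m.1, m.2 * B₁ m.2 * (Φ m.1 (B₁ m.2))⁻¹)) n) := by
  refine ⟨⟨?_, ?_⟩, ?_⟩
  · rintro ⟨a, p⟩ ⟨b, q⟩ hpq
    obtain ⟨rfl, hpq⟩ := Prod.mk.inj hpq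
    obtain ⟨p, rfl⟩ := hrb.hatPhi_surjective hcm a p
    obtain ⟨q, rfl⟩ := hrb.hatPhi_surjective hcm a q
    dsimp only at hpq
    rw [hrb.twist_hatPhi hcm, hrb.twist_hatPhi hcm] at hpq
    rw [(hcm.Φ_bij _).injective hpq]
  · rintro ⟨a, p⟩
    refine ⟨(a, hatPhi Φ B₁ B₀ a (Φ (a * B₀ a)⁻¹ p)), ?_⟩
    dsimp only
    rw [hrb.twist_hatPhi hcm, hcm.apply_inv_self]
  · rintro ⟨a, p⟩ ⟨b, q⟩
    have hB : B₁ (mulB B₁ p (hatPhi Φ B₁ B₀ a q)) = B₁ p * Φ (B₀ a) (B₁ q) := by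
      rw [mulB, ← hrb.rb₁, hrb.map_hatPhi]
    have hmul : mulB B₁ p (hatPhi Φ B₁ B₀ a q) * B₁ (mulB B₁ p (hatPhi Φ B₁ B₀ a q)) =
        p * B₁ p * Φ (a * B₀ a) (q * B₁ q) := by
      rw [hB, ← hrb.hatPhi_mul_map_hatPhi, hrb.map_hatPhi, mulB]
      group
    simp only [sdpMulHat, mulBcal, hrb.Bcal_twist hcm, sdpMul, sdpInv]
    rw [hmul, hB]
    simp [mulB, hcm.Φ_mul_hom, hcm.Φ_mul, hcm.map_inv, hcm.inv_apply_self, mul_assoc]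
end

section
/- Let (𝓑₁, 𝓑₀) be a Rota-Baxter operator on a crossed module of groups (H, G, t, Φ). Let (G ⋉_Φ H, ·_Φ) be the semidirect product group with (a, p) ·_Φ (b, q) = (a·b, p·Φ(a)(q)) and let 𝓑(a, p) = (𝓑₀(a), Φ(𝓑₀(a))(𝓑₁(Φ(𝓑₀(a)⁻¹·a⁻¹)(p)))). Define R₁ on (G × H) × (G × H) by R₁(m, n) = (Ad_{𝓑(m)}(n), Ad_{(𝓑(c)⁻¹)·_Φ c⁻¹}(m)) where c = Ad_{𝓑(m)}(n) and Ad is conjugation in (G ⋉_Φ H, ·_Φ). Define R₀ on G × G by R₀(a, b) = (Ad_{𝓑₀(a)}(b), Ad_{(𝓑₀(d)⁻¹)·d⁻¹}(a)) with d = Ad_{𝓑₀(a)}(b). Then R₁ and R₀ are bijections satisfying the braid relation (R × Id)(Id × R)(R × Id) = (Id × R)(R × Id)(Id × R) on their respective triple products; i.e., (G × H, R₁) and (G, R₀) are set-theoretical solutions of the Yang-Baxter equation. -/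
/-- The Yang-Baxter map `R(m,n) = (Ad_{B(m)}(n), Ad_{B(c)⁻¹·c⁻¹}(m))`, `c = Ad_{B(m)}(n)`,
written for an abstract multiplication `mul` and inversion `inv`. -/
def Rgen {X : Type*} (mul : X → X → X) (inv : X → X) (B : X → X) (z : X × X) : X × X :=
  let c := mul (mul (B z.1) z.2) (inv (B z.1))
  let d := mul (inv (B c)) (inv c)
  (c, mul (mul d z.1) (inv d))

/-- `R × Id` on triples. -/
def R12 {X : Type*} (R : X × X → X × X) (w : X × X × X) : X × X × X :=
  ((R (w.1, w.2.1)).1, (R (w.1, w.2.1)).2, w.2.2)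

/-- `Id × R` on triples. -/
def R23 {X : Type*} (R : X × X → X × X) (w : X × X × X) : X × X × X :=
  (w.1, R w.2)

namespace IsRotaBaxter

variable {X : Type*} [Group X] {B : X → X}

lemma map_one_s8 (hB : IsRotaBaxter B) : B 1 = 1 := by
  simpa using hB 1 1

/-- The inverse of `b` for the product `x ∘ y = x * B x * y * (B x)⁻¹` is mapped to `(B b)⁻¹`. -/
lemma map_circInv (hB : IsRotaBaxter B) (b : X) : B ((B b)⁻¹ * b⁻¹ * B b) = (B b)⁻¹ := by
  have h := hB b ((B b)⁻¹ * b⁻¹ * B b)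
  rw [show b * B b * ((B b)⁻¹ * b⁻¹ * B b) * (B b)⁻¹ = 1 by group, hB.map_one_s8] at h
  exact eq_inv_of_mul_eq_one_right h

end IsRotaBaxter

section YangBaxter

variable {X : Type*} [Group X]

/-- `Rgen` for the multiplication and inversion of a group. -/
abbrev ybMap (B : X → X) : X × X → X × X := Rgen (fun a b : X => a * b) (fun a => a⁻¹) B

lemma ybMap_fst (B : X → X) (a b : X) : (ybMap B (a, b)).1 = B a * b * (B a)⁻¹ := rfl

lemma ybMap_snd (B : X → X) (a b : X) :
    (ybMap B (a, b)).2 =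
      ((ybMap B (a, b)).1 * B (ybMap B (a, b)).1)⁻¹ * a *
        ((ybMap B (a, b)).1 * B (ybMap B (a, b)).1) := by
  simp only [ybMap, Rgen]
  group

lemma ybMap_bijective (B : X → X) : Function.Bijective (ybMap B) := by
  refine Function.bijective_iff_has_inverse.2 ⟨fun z =>
    (z.1 * B z.1 * z.2 * (z.1 * B z.1)⁻¹,
      (B (z.1 * B z.1 * z.2 * (z.1 * B z.1)⁻¹))⁻¹ * z.1 *
        B (z.1 * B z.1 * z.2 * (z.1 * B z.1)⁻¹)), ?_, ?_⟩
  · rintro ⟨a, b⟩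
    have h : (ybMap B (a, b)).1 * B (ybMap B (a, b)).1 * (ybMap B (a, b)).2 *
        ((ybMap B (a, b)).1 * B (ybMap B (a, b)).1)⁻¹ = a := by
      rw [ybMap_snd]
      group
    simp only [h]
    rw [ybMap_fst]
    refine Prod.ext rfl ?_
    group
  · rintro ⟨u, v⟩
    simp only
    set a := u * B u * v * (u * B u)⁻¹ with ha
    have h : (ybMap B (a, (B a)⁻¹ * u * B a)).1 = u := by
      rw [ybMap_fst]
      group
    ext
    · exact h
    · rw [ybMap_snd, h, ha]
      group

lemma ybMap_circ (B : X → X) (a b : X) :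
    (ybMap B (a, b)).1 * B (ybMap B (a, b)).1 * (ybMap B (a, b)).2 * (B (ybMap B (a, b)).1)⁻¹ =
      a * B a * b * (B a)⁻¹ := by
  rw [ybMap_snd]
  generalize hu : B (ybMap B (a, b)).1 = k
  rw [ybMap_fst]
  group

variable {B : X → X}

lemma IsRotaBaxter.ybMap_map_mul (hB : IsRotaBaxter B) (a b : X) :
    B (ybMap B (a, b)).1 * B (ybMap B (a, b)).2 = B a * B b := by
  rw [hB, hB, ybMap_circ]

/-- The map `x ↦ x * B x` is multiplicative for `x ∘ y = x * B x * y * (B x)⁻¹`. -/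
lemma IsRotaBaxter.mul_map_mul (hB : IsRotaBaxter B) (a b : X) :
    a * B a * (b * B b) = a * B a * b * (B a)⁻¹ * B (a * B a * b * (B a)⁻¹) := by
  rw [← hB]
  group

lemma IsRotaBaxter.ybMap_mul_map_mul (hB : IsRotaBaxter B) (a b : X) :
    (ybMap B (a, b)).1 * B (ybMap B (a, b)).1 * ((ybMap B (a, b)).2 * B (ybMap B (a, b)).2) =
      a * B a * (b * B b) := by
  rw [hB.mul_map_mul, hB.mul_map_mul, ybMap_circ]

/-- The left action `b ↦ (ybMap B (a, b)).1` is compatible with `ybMap`. -/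
lemma IsRotaBaxter.ybMap_fst_fst (hB : IsRotaBaxter B) (a b c : X) :
    (ybMap B ((ybMap B (a, b)).1, (ybMap B ((ybMap B (a, b)).2, c)).1)).1 =
      (ybMap B (a, (ybMap B (b, c)).1)).1 := by
  have h := hB.ybMap_map_mul a b
  rw [ybMap_fst, ybMap_fst _ (ybMap B (a, b)).2, ybMap_fst _ a (ybMap B (b, c)).1,
    ybMap_fst _ b c]
  calc _ = (B (ybMap B (a, b)).1 * B (ybMap B (a, b)).2) * c *
        (B (ybMap B (a, b)).1 * B (ybMap B (a, b)).2)⁻¹ := by group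
    _ = _ := by rw [h]; group

/-- Acting on the right by `b` and then by `c` is acting by `b * B b * c * (B b)⁻¹`. -/
lemma IsRotaBaxter.ybMap_snd_snd (hB : IsRotaBaxter B) (a b c : X) :
    (ybMap B ((ybMap B (a, b)).2, c)).2 = (ybMap B (a, b * B b * c * (B b)⁻¹)).2 := by
  have h := hB.ybMap_map_mul a b
  have hT : (ybMap B (a, b)).1 * B (ybMap B (a, b)).1 *
      ((ybMap B ((ybMap B (a, b)).2, c)).1 * B (ybMap B ((ybMap B (a, b)).2, c)).1) =
      (ybMap B (a, b * B b * c * (B b)⁻¹)).1 * B (ybMap B (a, b * B b * c * (B b)⁻¹)).1 := by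
    have e : (ybMap B (a, b)).1 * B (ybMap B (a, b)).1 * (ybMap B ((ybMap B (a, b)).2, c)).1 *
        (B (ybMap B (a, b)).1)⁻¹ = (ybMap B (a, b * B b * c * (B b)⁻¹)).1 := by
      rw [ybMap_fst B _ c]
      calc _ = (ybMap B (a, b)).1 * ((B (ybMap B (a, b)).1 * B (ybMap B (a, b)).2) * c *
            (B (ybMap B (a, b)).1 * B (ybMap B (a, b)).2)⁻¹) := by group
        _ = _ := by rw [h, ybMap_fst, ybMap_fst]; group
    rw [hB.mul_map_mul, e]
  rw [ybMap_snd B _ c, ybMap_snd B a (_ * _), ← hT]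
  generalize (ybMap B ((ybMap B (a, b)).2, c)).1 * B (ybMap B ((ybMap B (a, b)).2, c)).1 = k
  rw [ybMap_snd B a b]
  group

lemma IsRotaBaxter.ybMap_braid (hB : IsRotaBaxter B) (w : X × X × X) :
    R12 (ybMap B) (R23 (ybMap B) (R12 (ybMap B) w)) =
      R23 (ybMap B) (R12 (ybMap B) (R23 (ybMap B) w)) := by
  have key : ∀ v u : X × X × X, v.1 = u.1 → v.2.2 = u.2.2 →
      B v.1 * B v.2.1 * B v.2.2 = B u.1 * B u.2.1 * B u.2.2 →
      v.1 * B v.1 * (v.2.1 * B v.2.1) * (v.2.2 * B v.2.2) =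
        u.1 * B u.1 * (u.2.1 * B u.2.1) * (u.2.2 * B u.2.2) → v = u := by
    rintro ⟨x, y, z⟩ ⟨x₂, y₂, z₂⟩ rfl rfl h₁ h₂
    have h₃ : B y = B y₂ := mul_left_cancel (mul_right_cancel h₁)
    have h₄ : y * B y = y₂ * B y₂ := mul_left_cancel (mul_right_cancel h₂)
    rw [h₃] at h₄
    rw [mul_right_cancel h₄]
  -- both `B` and `x ↦ x * B x` have invariant products along `R12` and `R23`
  have b12 : ∀ v : X × X × X, B (R12 (ybMap B) v).1 * B (R12 (ybMap B) v).2.1 *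
      B (R12 (ybMap B) v).2.2 = B v.1 * B v.2.1 * B v.2.2 := fun v => by
    simp only [R12, hB.ybMap_map_mul]
  have b23 : ∀ v : X × X × X, B (R23 (ybMap B) v).1 * B (R23 (ybMap B) v).2.1 *
      B (R23 (ybMap B) v).2.2 = B v.1 * B v.2.1 * B v.2.2 := fun v => by
    simp only [R23, mul_assoc]
    rw [hB.ybMap_map_mul]
  have t12 : ∀ v : X × X × X, (R12 (ybMap B) v).1 * B (R12 (ybMap B) v).1 *
      ((R12 (ybMap B) v).2.1 * B (R12 (ybMap B) v).2.1) *
      ((R12 (ybMap B) v).2.2 * B (R12 (ybMap B) v).2.2) =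
      v.1 * B v.1 * (v.2.1 * B v.2.1) * (v.2.2 * B v.2.2) := fun v => by
    simp only [R12, hB.ybMap_mul_map_mul]
  have t23 : ∀ v : X × X × X, (R23 (ybMap B) v).1 * B (R23 (ybMap B) v).1 *
      ((R23 (ybMap B) v).2.1 * B (R23 (ybMap B) v).2.1) *
      ((R23 (ybMap B) v).2.2 * B (R23 (ybMap B) v).2.2) =
      v.1 * B v.1 * (v.2.1 * B v.2.1) * (v.2.2 * B v.2.2) := fun v => by
    have h := hB.ybMap_mul_map_mul v.2.1 v.2.2
    simp only [R23]
    rw [mul_assoc (v.1 * B v.1), mul_assoc (v.1 * B v.1), h]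
  have h₁ : (R12 (ybMap B) (R23 (ybMap B) (R12 (ybMap B) w))).1 =
      (R23 (ybMap B) (R12 (ybMap B) (R23 (ybMap B) w))).1 :=
    hB.ybMap_fst_fst w.1 w.2.1 w.2.2
  have h₃ : (R12 (ybMap B) (R23 (ybMap B) (R12 (ybMap B) w))).2.2 =
      (R23 (ybMap B) (R12 (ybMap B) (R23 (ybMap B) w))).2.2 := by
    change (ybMap B ((ybMap B (w.1, w.2.1)).2, w.2.2)).2 =
      (ybMap B ((ybMap B (w.1, (ybMap B (w.2.1, w.2.2)).1)).2, (ybMap B (w.2.1, w.2.2)).2)).2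
    rw [hB.ybMap_snd_snd, hB.ybMap_snd_snd, ybMap_circ B w.2.1]
  refine key _ _ h₁ h₃ ?_ ?_
  · rw [b12, b23, b12, b23, b12, b23]
  · rw [t12, t23, t12, t23, t12, t23]

end YangBaxter

section SemidirectProduct

variable {H G : Type*} [Group H] [Group G] {t : H → G} {Φ : G → H → H}

lemma IsCrossedModule.map_one_s8 (hcm : IsCrossedModule t Φ) (a : G) : Φ a 1 = 1 := by
  simpa using hcm.Φ_mul_hom a 1 1

lemma IsCrossedModule.map_inv_s8 (hcm : IsCrossedModule t Φ) (a : G) (p : H) :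
    Φ a p⁻¹ = (Φ a p)⁻¹ := by
  refine eq_inv_of_mul_eq_one_left ?_
  rw [← hcm.Φ_mul_hom, inv_mul_cancel, hcm.map_one_s8]

/-- The group `G ⋉_Φ H`. -/
abbrev IsCrossedModule.sdpGroup (hcm : IsCrossedModule t Φ) : Group (G × H) :=
  letI : Mul (G × H) := ⟨sdpMul Φ⟩
  letI : Inv (G × H) := ⟨sdpInv Φ⟩
  letI : One (G × H) := ⟨(1, 1)⟩
  Group.ofLeftAxioms
    (fun a b c => Prod.ext (mul_assoc _ _ _) <| by
      change a.2 * Φ a.1 b.2 * Φ (a.1 * b.1) c.2 = a.2 * Φ a.1 (b.2 * Φ b.1 c.2)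
      rw [hcm.Φ_mul, hcm.Φ_mul_hom, mul_assoc])
    (fun a => Prod.ext (one_mul _) <| by
      change 1 * Φ 1 a.2 = a.2
      rw [hcm.Φ_one, one_mul])
    (fun a => Prod.ext (inv_mul_cancel _) <| by
      change Φ a.1⁻¹ a.2⁻¹ * Φ a.1⁻¹ a.2 = 1
      rw [← hcm.Φ_mul_hom, inv_mul_cancel, hcm.map_one_s8])

variable {B₁ : H → H} {B₀ : G → G}

lemma IsCMRotaBaxter.compat_inv (hrb : IsCMRotaBaxter t Φ B₁ B₀)
    (b : G) (x : H) :
    Φ (B₀ b)⁻¹ (B₁ x) =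
      B₁ (Φ (b * B₀ b)⁻¹ (x * B₁ x) * (Φ (B₀ b)⁻¹ (B₁ x))⁻¹) := by
  have h := hrb.compat ((B₀ b)⁻¹ * b⁻¹ * B₀ b) x
  rwa [hrb.rb₀.map_circInv,
    show (B₀ b)⁻¹ * b⁻¹ * B₀ b * (B₀ b)⁻¹ = (b * B₀ b)⁻¹ by group] at h

lemma IsCMRotaBaxter.isRotaBaxter_Bcal (hcm : IsCrossedModule t Φ)
    (hrb : IsCMRotaBaxter t Φ B₁ B₀) :
    @IsRotaBaxter (G × H) hcm.sdpGroup (Bcal Φ B₁ B₀) := by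
  rintro ⟨a, p⟩ ⟨b, q⟩
  change sdpMul Φ (Bcal Φ B₁ B₀ (a, p)) (Bcal Φ B₁ B₀ (b, q)) =
    Bcal Φ B₁ B₀ (sdpMul Φ (sdpMul Φ (sdpMul Φ (a, p) (Bcal Φ B₁ B₀ (a, p))) (b, q))
      (sdpInv Φ (Bcal Φ B₁ B₀ (a, p))))
  obtain ⟨x, rfl⟩ := (hcm.Φ_bij (a * B₀ a)).2 p
  obtain ⟨z, rfl⟩ := (hcm.Φ_bij (b * B₀ b)).2 q
  have hcancel : ∀ (g : G) (r : H), Φ ((B₀ g)⁻¹ * g⁻¹) (Φ (g * B₀ g) r) = r := fun g r => by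
    rw [← hcm.Φ_mul, show (B₀ g)⁻¹ * g⁻¹ * (g * B₀ g) = 1 by group, hcm.Φ_one]
  have h₀ := hrb.rb₀ a b
  have hc := hrb.compat_inv b x
  set y := Φ (b * B₀ b)⁻¹ (x * B₁ x) * (Φ (B₀ b)⁻¹ (B₁ x))⁻¹ with hy
  have h₁ := hrb.rb₁ y z
  simp only [Bcal, sdpMul, sdpInv, hcancel]
  rw [← h₀]
  refine Prod.ext rfl ?_
  have harg : Φ ((B₀ a * B₀ b)⁻¹ * (a * B₀ a * b * (B₀ a)⁻¹)⁻¹)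
      (Φ (a * B₀ a) x * Φ a (Φ (B₀ a) (B₁ x)) * Φ (a * B₀ a) (Φ (b * B₀ b) z) *
        Φ (a * B₀ a * b) (Φ (B₀ a)⁻¹ (Φ (B₀ a) (B₁ x))⁻¹)) = y * B₁ y * z * (B₁ y)⁻¹ := by
    rw [← hc, hy]
    simp [hcm.Φ_mul_hom, hcm.map_inv_s8, ← hcm.Φ_mul, hcm.Φ_one, mul_assoc]
  simp only [harg]
  rw [← h₁, ← hc]
  simp [hcm.Φ_mul_hom, ← hcm.Φ_mul, mul_assoc]

end SemidirectProduct

theorem stmt8 {H G : Type*} [Group H] [Group G] (t : H → G) (Φ : G → H → H)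
    (B₁ : H → H) (B₀ : G → G) (hcm : IsCrossedModule t Φ)
    (hrb : IsCMRotaBaxter t Φ B₁ B₀) :
    -- R₁, built from 𝓑 and conjugation in G ⋉_Φ H, is a set-theoretical YBE solution
    (Function.Bijective (Rgen (sdpMul Φ) (sdpInv Φ) (Bcal Φ B₁ B₀)) ∧
      ∀ w : (G × H) × (G × H) × (G × H),
        R12 (Rgen (sdpMul Φ) (sdpInv Φ) (Bcal Φ B₁ B₀))
            (R23 (Rgen (sdpMul Φ) (sdpInv Φ) (Bcal Φ B₁ B₀))
              (R12 (Rgen (sdpMul Φ) (sdpInv Φ) (Bcal Φ B₁ B₀)) w))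
          = R23 (Rgen (sdpMul Φ) (sdpInv Φ) (Bcal Φ B₁ B₀))
              (R12 (Rgen (sdpMul Φ) (sdpInv Φ) (Bcal Φ B₁ B₀))
                (R23 (Rgen (sdpMul Φ) (sdpInv Φ) (Bcal Φ B₁ B₀)) w))) ∧
    -- R₀, built from B₀ and conjugation in G, is a set-theoretical YBE solution
    (Function.Bijective (Rgen (fun a b : G => a * b) (fun a => a⁻¹) B₀) ∧
      ∀ w : G × G × G,
        R12 (Rgen (fun a b : G => a * b) (fun a => a⁻¹) B₀)
            (R23 (Rgen (fun a b : G => a * b) (fun a => a⁻¹) B₀)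
              (R12 (Rgen (fun a b : G => a * b) (fun a => a⁻¹) B₀) w))
          = R23 (Rgen (fun a b : G => a * b) (fun a => a⁻¹) B₀)
              (R12 (Rgen (fun a b : G => a * b) (fun a => a⁻¹) B₀)
                (R23 (Rgen (fun a b : G => a * b) (fun a => a⁻¹) B₀) w))) := by
  exact ⟨⟨@ybMap_bijective _ hcm.sdpGroup _,
    @IsRotaBaxter.ybMap_braid _ hcm.sdpGroup _ (hrb.isRotaBaxter_Bcal hcm)⟩,
    ybMap_bijective _, hrb.rb₀.ybMap_braid⟩
end
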